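/- arXiv:1006.2172 — 2 statements merged into one kernel-verified Lean document; each statement's English description precedes it below -/
import Mathlib

section
/- Let f₁, f₂ ∈ C^∞[0,1] with supp(f₁) ⊂ (0,1] and supp(f₂) ⊂ (0,1]. Then there exist u₁ ∈ C³[0,1] with u₁(0) = u₁'(0) = u₁''(0) = 0 and u₂ ∈ C³[0,1] with u₂(0) = 0 such that for all ρ ∈ (0,1]: ρu₁'(ρ) − ρu₂'(ρ) + u₂(ρ) = f₁(ρ) and −u₁'(ρ)/ρ + ρu₂'(ρ) + u₂(ρ) = f₂(ρ). -/
/-- One-sided derivative on `[0,1]`. -/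
noncomputable def dI (f : ℝ → ℂ) (ρ : ℝ) : ℂ := derivWithin f (Set.Icc 0 1) ρ

/-!
Put `u₂ = ρ w`. The first equation gives `u₁' = f₁ / ρ + ρ w'`, and then the second becomes
`((ρ² - 1) w)' = g` with `g = f₁ / ρ² + f₂`. Its solution regular at `ρ = 1` satisfies
`(ρ² - 1) w(ρ) = ∫ s in 1..ρ, g s`, so `w(ρ) = (ρ + 1)⁻¹ ∫ t in 0..1, g (1 + (ρ - 1) t)`, which is
as smooth as `g`. At the origin `u₁' = ρ r` with `r = f₁ / ρ² + w'`, and the equation for `w` gives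
`r(0) = -f₂(0) = 0`, so `u₁''(0) = 0`. The quotient `f₁ / ρ²` is smooth by Hadamard's lemma, whose
factor is again a mean value along a segment.
-/

open Set Filter Topology

section Vanishing

variable {E : Type*} [NormedAddCommGroup E] [NormedSpace ℝ E]

lemma hasDerivWithinAt_sub_smul_of_continuousWithinAt {g : ℝ → E} {s : Set ℝ} {c : ℝ}
    (hg : ContinuousWithinAt g s c) :
    HasDerivWithinAt (fun x => (x - c) • g x) (g c) s c := by
  rw [hasDerivWithinAt_iff_tendsto_slope]
  refine (hg.mono sdiff_subset).tendsto.congr' ?_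
  filter_upwards [self_mem_nhdsWithin] with x hx
  rw [slope_def_module, sub_self, zero_smul, sub_zero, inv_smul_smul₀ (sub_ne_zero.2 hx.2)]

lemma derivWithin_Icc_left_eq_zero {f : ℝ → E} {a b δ : ℝ} (hδ : a < δ)
    (hf : ∀ x ∈ Icc a δ, f x = 0) : derivWithin f (Icc a b) a = 0 := by
  have hzero : f =ᶠ[𝓝[Icc a b] a] fun _ => 0 := by
    filter_upwards [self_mem_nhdsWithin, mem_nhdsWithin_of_mem_nhds (Iic_mem_nhds hδ)]
      with x hx hxδ using hf x ⟨hx.1, hxδ⟩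
  rw [hzero.derivWithin_eq (hf a (left_mem_Icc.2 hδ.le)), derivWithin_fun_const, Pi.zero_apply]

end Vanishing

section Primitive

variable {E : Type*} [NormedAddCommGroup E] [NormedSpace ℝ E] [CompleteSpace E] {a b c x : ℝ}

lemma hasDerivWithinAt_integral_of_continuousOn_Icc {f : ℝ → E} (hf : ContinuousOn f (Icc a b))
    (hc : c ∈ Icc a b) (hx : x ∈ Icc a b) :
    HasDerivWithinAt (fun y => ∫ s in c..y, f s) (f x) (Icc a b) x := by
  have : Fact (x ∈ Icc a b) := ⟨hx⟩
  exact intervalIntegral.integral_hasDerivWithinAt_right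
    (hf.mono (uIcc_subset_Icc hc hx)).intervalIntegrable
    (hf.stronglyMeasurableAtFilter_nhdsWithin measurableSet_Icc x) (hf x hx)

lemma contDiffOn_integral_of_contDiffOn_Icc {n : ℕ∞} {f : ℝ → E} (hab : a < b)
    (hf : ContDiffOn ℝ n f (Icc a b)) (hc : c ∈ Icc a b) :
    ContDiffOn ℝ (n + 1) (fun x => ∫ s in c..x, f s) (Icc a b) := by
  have hderiv := fun x hx =>
    hasDerivWithinAt_integral_of_continuousOn_Icc (x := x) hf.continuousOn hc hx
  rw [contDiffOn_succ_iff_derivWithin (uniqueDiffOn_Icc hab)]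
  exact ⟨fun x hx => (hderiv x hx).differentiableWithinAt, by simp, hf.congr fun x hx =>
    (hderiv x hx).derivWithin (uniqueDiffOn_Icc hab x hx)⟩

lemma integral_derivWithin_Icc_of_mem {f : ℝ → E} (hab : a < b) (hf : ContDiffOn ℝ 1 f (Icc a b))
    (hc : c ∈ Icc a b) (hx : x ∈ Icc a b) :
    ∫ s in c..x, derivWithin f (Icc a b) s = f x - f c := by
  have hsub : uIcc c x ⊆ Icc a b := uIcc_subset_Icc hc hx
  have hf' : ContinuousOn (derivWithin f (Icc a b)) (Icc a b) :=
    hf.continuousOn_derivWithin (uniqueDiffOn_Icc hab) le_rfl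
  refine intervalIntegral.integral_eq_sub_of_hasDeriv_right (hf.continuousOn.mono hsub)
    (fun y hy => ?_) (hf'.mono hsub).intervalIntegrable
  have hyI : Icc a b ∈ 𝓝 y := mem_of_superset (Icc_mem_nhds hy.1 hy.2) hsub
  exact ((hf.differentiableOn one_ne_zero y (mem_of_mem_nhds hyI)).hasDerivWithinAt.hasDerivAt
    hyI).hasDerivWithinAt

lemma exists_contDiff_eqOn_Icc (hab : a < b) (n : ℕ) {f : ℝ → E}
    (hf : ContDiffOn ℝ n f (Icc a b)) : ∃ g, ContDiff ℝ n g ∧ EqOn g f (Icc a b) := by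
  induction n generalizing f with
  | zero =>
    refine ⟨IccExtend hab.le ((Icc a b).domRestrict f), ?_, fun x hx => IccExtend_of_mem _ _ hx⟩
    exact contDiff_zero.2 hf.continuousOn.domRestrict.Icc_extend'
  | succ n ih =>
    have hunique := uniqueDiffOn_Icc hab
    push_cast at hf ⊢
    obtain ⟨g', hg', hg_eq⟩ := ih ((contDiffOn_succ_iff_derivWithin hunique).1 hf).2.2
    have hderiv (x : ℝ) : HasDerivAt (fun x => f a + ∫ s in a..x, g' s) (g' x) x :=
      (hg'.continuous.integral_hasStrictDerivAt a x).hasDerivAt.const_add _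
    refine ⟨fun x => f a + ∫ s in a..x, g' s, ?_, fun x hx => ?_⟩
    · rw [contDiff_succ_iff_deriv, deriv_eq hderiv]
      exact ⟨fun x => (hderiv x).differentiableAt, by simp, hg'⟩
    · have ha : a ∈ Icc a b := left_mem_Icc.2 hab.le
      beta_reduce
      rw [intervalIntegral.integral_congr (hg_eq.mono (uIcc_subset_Icc ha hx)),
        integral_derivWithin_Icc_of_mem hab hf.one_of_succ ha hx, add_sub_cancel]

end Primitive

section SegmentMoment

variable {E : Type*} [NormedAddCommGroup E] [NormedSpace ℝ E]

/-- The `k`-th moment of `f` along the segment from `c` to `x`, parametrised by `[0, 1]`; for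
`k = 0` it is the mean value of `f` there, which is `(x - c)⁻¹ ∫ s in c..x, f s` for `x ≠ c`. -/
noncomputable def segmentMoment (k : ℕ) (c : ℝ) (f : ℝ → E) (x : ℝ) : E :=
  ∫ t in (0 : ℝ)..1, t ^ k • f (c + (x - c) * t)

lemma sub_smul_segmentMoment_zero (c : ℝ) (f : ℝ → E) (x : ℝ) :
    (x - c) • segmentMoment 0 c f x = ∫ s in c..x, f s := by
  simp [segmentMoment]

lemma segmentMoment_zero_self [CompleteSpace E] (c : ℝ) (f : ℝ → E) :
    segmentMoment 0 c f c = f c := by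
  simp [segmentMoment]

lemma segmentMoment_congr {k : ℕ} {a b c x : ℝ} {f g : ℝ → E} (h : EqOn f g (Icc a b))
    (hc : c ∈ Icc a b) (hx : x ∈ Icc a b) : segmentMoment k c f x = segmentMoment k c g x := by
  refine intervalIntegral.integral_congr fun t ht => ?_
  rw [uIcc_of_le zero_le_one] at ht
  have hmem : c + (x - c) * t ∈ Icc a b := by
    simpa [mul_comm] using (convex_Icc a b).add_smul_sub_mem hc hx ht
  simp only [h hmem]

lemma hasDerivAt_segmentMoment (k : ℕ) (c : ℝ) {f : ℝ → E} (hf : ContDiff ℝ 1 f) (x : ℝ) :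
    HasDerivAt (segmentMoment k c f) (segmentMoment (k + 1) c (deriv f) x) x := by
  have : Continuous f := hf.continuous
  have : Continuous (deriv f) := hf.continuous_deriv le_rfl
  have hF' : Continuous fun p : ℝ × ℝ => p.2 ^ (k + 1) • deriv f (c + (p.1 - c) * p.2) := by
    fun_prop
  obtain ⟨C, hC⟩ := ((isCompact_closedBall x 1).prod
    (isCompact_Icc (a := (0 : ℝ)) (b := 1))).exists_bound_of_continuousOn hF'.continuousOn
  refine (intervalIntegral.hasDerivAt_integral_of_dominated_loc_of_deriv_le
    (F' := fun y t => t ^ (k + 1) • deriv f (c + (y - c) * t)) (bound := fun _ => C)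
    (Metric.closedBall_mem_nhds x one_pos)
    (Eventually.of_forall fun y => Continuous.aestronglyMeasurable (by fun_prop))
    (Continuous.intervalIntegrable (by fun_prop) _ _)
    (Continuous.aestronglyMeasurable (by fun_prop))
    (MeasureTheory.ae_of_all _ fun t ht y hy => ?_) intervalIntegrable_const
    (MeasureTheory.ae_of_all _ fun t _ y _ => ?_)).2
  · rw [uIoc_of_le zero_le_one] at ht
    exact hC (y, t) ⟨hy, Ioc_subset_Icc_self ht⟩
  · have hsegment : HasDerivAt (fun y => c + (y - c) * t) t y := by
      simpa using (((hasDerivAt_id y).sub_const c).mul_const t).const_add c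
    have hfsegment := (hf.differentiable one_ne_zero _).hasDerivAt.scomp y hsegment
    exact (hfsegment.const_smul (t ^ k)).congr_deriv (by rw [smul_smul, ← pow_succ])

lemma contDiff_segmentMoment (n k : ℕ) (c : ℝ) {f : ℝ → E} (hf : ContDiff ℝ n f) :
    ContDiff ℝ n (segmentMoment k c f) := by
  induction n generalizing k f with
  | zero =>
    have : Continuous f := hf.continuous
    exact contDiff_zero.2
      (intervalIntegral.continuous_parametric_intervalIntegral_of_continuous' (by fun_prop) _ _)
  | succ n ih =>
    push_cast at hf ⊢
    have hderiv := hasDerivAt_segmentMoment k c hf.one_of_succ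
    rw [contDiff_succ_iff_deriv, deriv_eq hderiv]
    exact ⟨fun x => (hderiv x).differentiableAt, by simp,
      ih (k + 1) (contDiff_succ_iff_deriv.1 hf).2.2⟩

lemma contDiffOn_segmentMoment [CompleteSpace E] {n : ℕ∞} (k : ℕ) {a b c : ℝ} (hab : a < b)
    (hc : c ∈ Icc a b) {f : ℝ → E} (hf : ContDiffOn ℝ n f (Icc a b)) :
    ContDiffOn ℝ n (segmentMoment k c f) (Icc a b) := by
  rw [contDiffOn_iff_forall_nat_le] at hf ⊢
  intro m hm
  obtain ⟨g, hg, hg_eq⟩ := exists_contDiff_eqOn_Icc hab m (hf m hm)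
  exact (contDiff_segmentMoment m k c hg).contDiffOn.congr fun x hx =>
    segmentMoment_congr hg_eq.symm hc hx

end SegmentMoment

section DivisionAndODE

variable {E : Type*} [NormedAddCommGroup E] [NormedSpace ℝ E] [CompleteSpace E] {n : ℕ∞}
  {a b c : ℝ}

lemma exists_contDiffOn_eq_sub_smul (hab : a < b) (hc : c ∈ Icc a b) {f : ℝ → E}
    (hf : ContDiffOn ℝ (n + 1) f (Icc a b)) (hfc : f c = 0) :
    ∃ g : ℝ → E, ContDiffOn ℝ n g (Icc a b) ∧ g c = derivWithin f (Icc a b) c ∧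
      ∀ x ∈ Icc a b, f x = (x - c) • g x := by
  have hf' := ((contDiffOn_succ_iff_derivWithin (uniqueDiffOn_Icc hab)).1 hf).2.2
  refine ⟨segmentMoment 0 c (derivWithin f (Icc a b)), contDiffOn_segmentMoment 0 hab hc hf',
    segmentMoment_zero_self c _, fun x hx => ?_⟩
  rw [sub_smul_segmentMoment_zero, integral_derivWithin_Icc_of_mem hab hf.one_of_succ hc hx,
    hfc, sub_zero]

lemma exists_contDiffOn_eq_sub_sq_smul (hab : a < b) (hc : c ∈ Icc a b) {f : ℝ → E}
    (hf : ContDiffOn ℝ (n + 2) f (Icc a b)) (hfc : f c = 0)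
    (hf_deriv : derivWithin f (Icc a b) c = 0) :
    ∃ g : ℝ → E, ContDiffOn ℝ n g (Icc a b) ∧ ∀ x ∈ Icc a b, f x = (x - c) ^ 2 • g x := by
  have hf_succ : ContDiffOn ℝ ((n + 1 : ℕ∞) + 1) f (Icc a b) := by
    simpa [add_assoc, one_add_one_eq_two] using hf
  obtain ⟨h, hh, hhc, hfh⟩ := exists_contDiffOn_eq_sub_smul hab hc hf_succ hfc
  obtain ⟨g, hg, -, hhg⟩ :=
    exists_contDiffOn_eq_sub_smul hab hc (by simpa using hh) (hhc.trans hf_deriv)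
  exact ⟨g, hg, fun x hx => by rw [hfh x hx, hhg x hx, smul_smul, sq]⟩

lemma exists_contDiffOn_sq_sub_one_smul_derivWithin_add {g : ℝ → E}
    (hg : ContDiffOn ℝ (n + 1) g (Icc 0 1)) :
    ∃ w : ℝ → E, ContDiffOn ℝ (n + 1) w (Icc 0 1) ∧ ∀ x ∈ Icc (0 : ℝ) 1,
      (x ^ 2 - 1) • derivWithin w (Icc 0 1) x + (2 * x) • w x = g x := by
  have hone : (1 : ℝ) ∈ Icc (0 : ℝ) 1 := right_mem_Icc.2 zero_le_one
  have hunique := uniqueDiffOn_Icc (zero_lt_one (α := ℝ))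
  have hne : ∀ x ∈ Icc (0 : ℝ) 1, x + 1 ≠ 0 := fun x hx => by linarith [hx.1]
  let w : ℝ → E := fun x => (x + 1)⁻¹ • segmentMoment 0 1 g x
  have hw : ContDiffOn ℝ (n + 1) w (Icc 0 1) :=
    ((contDiffOn_id.add contDiffOn_const).inv hne).smul
      (contDiffOn_segmentMoment (n := n + 1) 0 zero_lt_one hone hg)
  have hprimitive : ∀ x ∈ Icc (0 : ℝ) 1, (x ^ 2 - 1) • w x = ∫ s in 1..x, g s := fun x hx => by
    rw [← sub_smul_segmentMoment_zero, smul_smul]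
    congr 1
    field_simp [hne x hx]
    ring
  refine ⟨w, hw, fun x hx => ?_⟩
  have hw' := (hw.differentiableOn (by simp) x hx).hasDerivWithinAt
  have hcoeff : HasDerivWithinAt (fun y : ℝ => y ^ 2 - 1) (2 * x) (Icc 0 1) x := by
    simpa using ((hasDerivAt_pow 2 x).sub_const 1).hasDerivWithinAt
  exact (hunique x hx).eq_deriv _ (hcoeff.smul hw')
    ((hasDerivWithinAt_integral_of_continuousOn_Icc hg.continuousOn hone hx).congr hprimitive
      (hprimitive x hx))

end DivisionAndODE

theorem stmt_10_general {E : Type*} [NormedAddCommGroup E] [NormedSpace ℝ E] [CompleteSpace E]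
    {n : ℕ∞} {f₁ f₂ : ℝ → E}
    (hf₁ : ContDiffOn ℝ (n + 3) f₁ (Icc 0 1)) (hf₂ : ContDiffOn ℝ (n + 1) f₂ (Icc 0 1))
    (hf₁_zero : f₁ 0 = 0) (hf₁_deriv : derivWithin f₁ (Icc 0 1) 0 = 0) (hf₂_zero : f₂ 0 = 0) :
    ∃ u₁ u₂ : ℝ → E,
      ContDiffOn ℝ (n + 1) u₁ (Icc 0 1) ∧
      u₁ 0 = 0 ∧ derivWithin u₁ (Icc 0 1) 0 = 0 ∧
      derivWithin (derivWithin u₁ (Icc 0 1)) (Icc 0 1) 0 = 0 ∧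
      ContDiffOn ℝ (n + 1) u₂ (Icc 0 1) ∧ u₂ 0 = 0 ∧
      ∀ ρ ∈ Ioc (0 : ℝ) 1,
        ρ • derivWithin u₁ (Icc 0 1) ρ - ρ • derivWithin u₂ (Icc 0 1) ρ + u₂ ρ = f₁ ρ ∧
        -(ρ⁻¹ • derivWithin u₁ (Icc 0 1) ρ) + ρ • derivWithin u₂ (Icc 0 1) ρ + u₂ ρ = f₂ ρ := by
  have hzero : (0 : ℝ) ∈ Icc (0 : ℝ) 1 := left_mem_Icc.2 zero_le_one
  have hunique := uniqueDiffOn_Icc (zero_lt_one (α := ℝ))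
  obtain ⟨φ, hφ, hf₁φ⟩ := exists_contDiffOn_eq_sub_sq_smul (n := n + 1) zero_lt_one hzero
    (by convert hf₁ using 1; push_cast; rw [add_assoc]; norm_num) hf₁_zero hf₁_deriv
  obtain ⟨w, hw, hode⟩ := exists_contDiffOn_sq_sub_one_smul_derivWithin_add (hφ.add hf₂)
  let r : ℝ → E := φ + derivWithin w (Icc 0 1)
  have hr : ContDiffOn ℝ n r (Icc 0 1) :=
    (hφ.of_le (by simp)).add ((contDiffOn_succ_iff_derivWithin hunique).1 hw).2.2
  have hr0 : r 0 = 0 := by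
    simpa [r, hf₂_zero, neg_eq_iff_add_eq_zero, add_comm] using hode 0 hzero
  have hu₁ := contDiffOn_integral_of_contDiffOn_Icc zero_lt_one (contDiffOn_id.smul hr) hzero
  have hu₁' : ∀ ρ ∈ Icc (0 : ℝ) 1,
      derivWithin (fun x => ∫ s in 0..x, s • r s) (Icc 0 1) ρ = ρ • r ρ := fun ρ hρ =>
    (hasDerivWithinAt_integral_of_continuousOn_Icc
      (contDiffOn_id.smul hr).continuousOn hzero hρ).derivWithin (hunique ρ hρ)
  have hu₂' : ∀ ρ ∈ Icc (0 : ℝ) 1, derivWithin (fun x => x • w x) (Icc 0 1) ρ =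
      ρ • derivWithin w (Icc 0 1) ρ + w ρ := fun ρ hρ => by
    simpa using ((hasDerivWithinAt_id ρ _).fun_smul
      (hw.differentiableOn (by simp) ρ hρ).hasDerivWithinAt).derivWithin (hunique ρ hρ)
  refine ⟨fun x => ∫ s in 0..x, s • r s, fun x => x • w x, hu₁, by simp, by simp [hu₁' 0 hzero],
    ?_, contDiffOn_id.smul hw, by simp, fun ρ hρ => ?_⟩
  · rw [derivWithin_congr hu₁' (hu₁' 0 hzero), ← hr0]
    simpa using (hasDerivWithinAt_sub_smul_of_continuousWithinAt
      (hr.continuousOn 0 hzero)).derivWithin (hunique 0 hzero)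
  · have hρI := Ioc_subset_Icc_self hρ
    have hf₂ρ : f₂ ρ = (ρ ^ 2 - 1) • derivWithin w (Icc 0 1) ρ + (2 * ρ) • w ρ - φ ρ :=
      eq_sub_of_add_eq' (hode ρ hρI).symm
    rw [hu₁' ρ hρI, hu₂' ρ hρI, hf₁φ ρ hρI, hf₂ρ, inv_smul_smul₀ hρ.1.ne']
    constructor <;> simp only [r, Pi.add_apply, sub_zero] <;> module

/-- range density step for Lumer–Phillips: for smooth `f₁, f₂` on `[0,1]`
supported in `(0,1]` there exist `u₁ ∈ C³[0,1]` with `u₁(0)=u₁'(0)=u₁''(0)=0` and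
`u₂ ∈ C³[0,1]` with `u₂(0)=0` solving
`ρu₁' − ρu₂' + u₂ = f₁` and `−u₁'/ρ + ρu₂' + u₂ = f₂` on `(0,1]`. -/
theorem stmt_10 (f₁ f₂ : ℝ → ℂ)
    (hf1 : ContDiffOn ℝ (⊤ : ℕ∞) f₁ (Set.Icc 0 1))
    (hf2 : ContDiffOn ℝ (⊤ : ℕ∞) f₂ (Set.Icc 0 1))
    (hs1 : ∃ δ : ℝ, 0 < δ ∧ ∀ ρ ∈ Set.Icc (0:ℝ) δ, f₁ ρ = 0)
    (hs2 : ∃ δ : ℝ, 0 < δ ∧ ∀ ρ ∈ Set.Icc (0:ℝ) δ, f₂ ρ = 0) :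
    ∃ u₁ u₂ : ℝ → ℂ,
      ContDiffOn ℝ 3 u₁ (Set.Icc 0 1) ∧
      u₁ 0 = 0 ∧ dI u₁ 0 = 0 ∧ dI (dI u₁) 0 = 0 ∧
      ContDiffOn ℝ 3 u₂ (Set.Icc 0 1) ∧ u₂ 0 = 0 ∧
      ∀ ρ ∈ Set.Ioc (0:ℝ) 1,
        (ρ:ℂ) * dI u₁ ρ - (ρ:ℂ) * dI u₂ ρ + u₂ ρ = f₁ ρ ∧
        -(dI u₁ ρ / (ρ:ℂ)) + (ρ:ℂ) * dI u₂ ρ + u₂ ρ = f₂ ρ := by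
  obtain ⟨δ₁, hδ₁, hf₁δ⟩ := hs1
  obtain ⟨δ₂, hδ₂, hf₂δ⟩ := hs2
  have hdI (u : ℝ → ℂ) : dI u = derivWithin u (Icc 0 1) := rfl
  simpa [hdI, div_eq_inv_mul, two_add_one_eq_three] using
    stmt_10_general (n := 2) (hf1.of_le (by norm_cast)) (hf2.of_le (by norm_cast))
      (hf₁δ 0 (left_mem_Icc.2 hδ₁.le)) (derivWithin_Icc_left_eq_zero hδ₁ hf₁δ)
      (hf₂δ 0 (left_mem_Icc.2 hδ₂.le))
end

section
/- Let λ ∈ ℂ with Re λ ≥ 1/2 and let u ∈ C^∞[0,1] be a nontrivial solution of −(1−ρ²)u''(ρ) − (2(1−ρ²)/ρ)u'(ρ) + 2λρu'(ρ) + (V(ρ)/ρ²)u(ρ) + λ(λ+1)u(ρ) = 0 on (0,1), where V(ρ) = 2(1−6ρ²+ρ⁴)/(1+ρ²)². Then λ = 1 and there exists a nonzero constant c ∈ ℂ such that u(ρ) = c·ρ/(1+ρ²) for all ρ ∈ [0,1]. -/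
/-- The potential `V(ρ) = 2(1−6ρ²+ρ⁴)/(1+ρ²)²`. -/
noncomputable def Vpot (ρ : ℝ) : ℝ := 2 * (1 - 6 * ρ ^ 2 + ρ ^ 4) / (1 + ρ ^ 2) ^ 2

/-!
The gauge mode `g(ρ) = ρ/(1+ρ²)` solves the equation at `λ = 1`, so it can be factored out by a
Darboux transformation. In the hyperbolic angle `artanh ρ`, and up to a power of `1-ρ²`, the
eigenvalue equation reads `A⁺A u = -(λ-1)² u` with a first-order operator `A` annihilating `g`;
hence `v = A u` solves `AA⁺ v = -(λ-1)² v`, which is again an equation of the original type but with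
the nonnegative, decreasing potential `2(3-ρ²)/(1+ρ²)`. For such a potential, let `F(ρ)` be the
energy flux through the boundary of the shrinking ball `r < ρ(T-t)`. Then `F(0) = 0`; the energy
identity gives `F' ≥ 0` when `Re λ ≥ 1/2`, strictly where `v ≠ 0`; and `F(1) ≤ 0`, because energy
only leaves through the light cone. So `v = 0`, hence `(λ-1)² u = 0`, which forces `λ = 1`, and then
`A u = 0` says that `u` is a multiple of `g`.
-/

open Set Filter Topology

section Calculus

lemma hasDerivAt_ofReal (ρ : ℝ) : HasDerivAt (fun s : ℝ => (s : ℂ)) 1 ρ := by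
  simpa using (hasDerivAt_id ρ).ofReal_comp

lemma eq_zero_of_hasDerivAt_nonneg_of_le {f f' : ℝ → ℝ} {a b : ℝ} (hf : ContinuousOn f (Icc a b))
    (hf' : ∀ x ∈ Ioo a b, HasDerivAt f (f' x) x) (hf'_nonneg : ∀ x ∈ Ioo a b, 0 ≤ f' x)
    (hba : f b ≤ f a) : ∀ x ∈ Ioo a b, f' x = 0 := by
  have hmono : MonotoneOn f (Icc a b) :=
    monotoneOn_of_hasDerivWithinAt_nonneg (convex_Icc a b) hf
      (fun x hx => (hf' x (by rwa [interior_Icc] at hx)).hasDerivWithinAt)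
      (fun x hx => hf'_nonneg x (by rwa [interior_Icc] at hx))
  intro x hx
  have hab : a ≤ b := (hx.1.trans hx.2).le
  have hconst : f =ᶠ[𝓝 x] fun _ => f a := by
    filter_upwards [Icc_mem_nhds hx.1 hx.2] with y hy
    exact le_antisymm ((hmono hy (right_mem_Icc.2 hab) hy.2).trans hba)
      (hmono (left_mem_Icc.2 hab) hy hy.1)
  exact (hf' x hx).unique ((hasDerivAt_const x (f a)).congr_of_eventuallyEq hconst)

lemma exists_eqOn_const_mul_of_deriv_mul_eq {𝕜 : Type*} [NontriviallyNormedField 𝕜]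
    [NormedAlgebra ℝ 𝕜] {s : Set ℝ} (hs : IsOpen s) (hs' : IsPreconnected s)
    {f g : ℝ → 𝕜} (hf : DifferentiableOn ℝ f s) (hg : DifferentiableOn ℝ g s)
    (hg0 : ∀ x ∈ s, g x ≠ 0) (hfg : ∀ x ∈ s, deriv f x * g x = f x * deriv g x) :
    ∃ c : 𝕜, EqOn f (fun x => c * g x) s := by
  have hderiv : EqOn (deriv fun x => f x / g x) 0 s := fun x hx => by
    rw [deriv_fun_div (hf.differentiableAt (hs.mem_nhds hx))
      (hg.differentiableAt (hs.mem_nhds hx)) (hg0 x hx), hfg x hx, sub_self, zero_div,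
      Pi.zero_apply]
  obtain ⟨c, hc⟩ := hs.exists_is_const_of_deriv_eq_zero hs' (hf.fun_div hg hg0) hderiv
  exact ⟨c, fun x hx => (div_eq_iff (hg0 x hx)).1 (hc x hx)⟩

variable {E : Type*} [NormedAddCommGroup E] [NormedSpace ℝ E]

lemma eqOn_deriv_derivWithin_Icc (f : ℝ → E) (a b : ℝ) :
    EqOn (deriv f) (derivWithin f (Icc a b)) (Ioo a b) :=
  fun _ hx => (derivWithin_of_mem_nhds (Icc_mem_nhds hx.1 hx.2)).symm

lemma hasDerivWithinAt_sq_smul_zero {f : ℝ → E} {l : E} (hf : Tendsto f (𝓝[>] 0) (𝓝 l)) :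
    HasDerivWithinAt (fun x => x ^ 2 • f x) 0 (Ici 0) 0 := by
  rw [hasDerivWithinAt_iff_tendsto_slope, Ici_sdiff_left]
  have hid : Tendsto (fun x : ℝ => x) (𝓝[>] 0) (𝓝 0) := tendsto_id.mono_left nhdsWithin_le_nhds
  refine Tendsto.congr' ?_ (by simpa only [zero_smul] using hid.smul hf)
  filter_upwards [self_mem_nhdsWithin] with x hx
  rw [slope_def_module, zero_pow two_ne_zero, zero_smul, sub_zero, sub_zero, smul_smul, sq,
    inv_mul_cancel_left₀ (mem_Ioi.1 hx).ne']

lemma exists_continuousOn_eqOn_slope {f : ℝ → E} {s : Set ℝ} {a : ℝ} (hf : ContinuousOn f s)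
    (hfa : DifferentiableWithinAt ℝ f s a) :
    ∃ q : ℝ → E, ContinuousOn q s ∧ EqOn (slope f a) q (s \ {a}) := by
  refine ⟨Function.update (slope f a) a (derivWithin f s a),
    continuousOn_update_iff.2 ⟨?_, fun _ =>
      hasDerivWithinAt_iff_tendsto_slope.1 hfa.hasDerivWithinAt⟩,
    fun x hx => (Function.update_of_ne hx.2 _ _).symm⟩
  rw [slope_fun_def]
  exact ((continuousOn_id.sub continuousOn_const).inv₀ fun x hx => sub_ne_zero.2 hx.2).smul
    ((hf.mono sdiff_subset).sub continuousOn_const)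

end Calculus

/-- The left-hand side of the eigenvalue equation `(E_λ)`, with an arbitrary potential `V`. -/
noncomputable def modeOperator (V : ℝ → ℝ) (lam : ℂ) (u : ℝ → ℂ) (ρ : ℝ) : ℂ :=
  -(1 - (ρ : ℂ) ^ 2) * deriv (deriv u) ρ
    - (2 * (1 - (ρ : ℂ) ^ 2) / (ρ : ℂ)) * deriv u ρ
    + 2 * lam * (ρ : ℂ) * deriv u ρ
    + ((V ρ : ℂ) / (ρ : ℂ) ^ 2) * u ρ
    + lam * (lam + 1) * u ρ

/-- `u` is a classical solution on `(0,1)` of the eigenvalue equation with potential `V`, that is,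
`e^{λτ} u(ρ)` is a mode solution. Nothing is required at the endpoints. -/
structure IsMode (V : ℝ → ℝ) (lam : ℂ) (u : ℝ → ℂ) : Prop where
  differentiableOn : DifferentiableOn ℝ u (Ioo 0 1)
  differentiableOn_deriv : DifferentiableOn ℝ (deriv u) (Ioo 0 1)
  modeOperator_eq_zero : ∀ ρ ∈ Ioo (0 : ℝ) 1, modeOperator V lam u ρ = 0

section Mode

variable {V : ℝ → ℝ} {lam : ℂ} {u : ℝ → ℂ} {ρ : ℝ}

lemma IsMode.of_contDiffOn (hu : ContDiffOn ℝ 2 u (Ioo 0 1))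
    (hode : ∀ ρ ∈ Ioo (0 : ℝ) 1, modeOperator V lam u ρ = 0) : IsMode V lam u where
  differentiableOn := hu.differentiableOn two_ne_zero
  differentiableOn_deriv :=
    (hu.deriv_of_isOpen isOpen_Ioo one_add_one_eq_two.le).differentiableOn one_ne_zero
  modeOperator_eq_zero := hode

lemma IsMode.hasDerivAt (hu : IsMode V lam u) (hρ : ρ ∈ Ioo (0 : ℝ) 1) :
    HasDerivAt u (deriv u ρ) ρ :=
  (hu.differentiableOn.differentiableAt (isOpen_Ioo.mem_nhds hρ)).hasDerivAt

lemma IsMode.hasDerivAt_deriv (hu : IsMode V lam u) (hρ : ρ ∈ Ioo (0 : ℝ) 1) :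
    HasDerivAt (deriv u) (deriv (deriv u) ρ) ρ :=
  (hu.differentiableOn_deriv.differentiableAt (isOpen_Ioo.mem_nhds hρ)).hasDerivAt

lemma sq_mul_modeOperator (V : ℝ → ℝ) (lam : ℂ) (u : ℝ → ℂ) (hρ : ρ ≠ 0) :
    (ρ : ℂ) ^ 2 * modeOperator V lam u ρ =
      -(1 - (ρ : ℂ) ^ 2) * (ρ ^ 2 * deriv (deriv u) ρ + 2 * ρ * deriv u ρ)
        + 2 * lam * ρ ^ 3 * deriv u ρ + V ρ * u ρ + lam * (lam + 1) * ρ ^ 2 * u ρ := by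
  have hρ' : (ρ : ℂ) ≠ 0 := mod_cast hρ
  simp only [modeOperator]
  field_simp
  ring

lemma one_sub_sq_ne_zero (hρ : ρ ∈ Ioo (0 : ℝ) 1) : 1 - (ρ : ℂ) ^ 2 ≠ 0 := by
  have : 1 - ρ ^ 2 ≠ 0 := by nlinarith [hρ.1, hρ.2]
  exact_mod_cast this

lemma IsMode.hasDerivAt_sq_mul_deriv (hu : IsMode V lam u) (hρ : ρ ∈ Ioo (0 : ℝ) 1) :
    HasDerivAt (fun s : ℝ => (s : ℂ) ^ 2 * deriv u s)
      ((2 * lam * ρ ^ 3 * deriv u ρ + V ρ * u ρ + lam * (lam + 1) * ρ ^ 2 * u ρ)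
        / (1 - (ρ : ℂ) ^ 2)) ρ := by
  refine (((hasDerivAt_ofReal ρ).pow 2).mul (hu.hasDerivAt_deriv hρ)).congr_deriv ?_
  have hode := sq_mul_modeOperator V lam u hρ.1.ne'
  rw [hu.modeOperator_eq_zero ρ hρ, mul_zero] at hode
  rw [eq_div_iff (one_sub_sq_ne_zero hρ)]
  simp only [Pi.pow_apply]
  push_cast
  linear_combination hode

end Mode

section Energy

variable {W : ℝ → ℝ} {lam : ℂ} {v : ℝ → ℂ} {ρ : ℝ}

/-- The energy flux of a mode `e^{λτ} v` through the boundary of the ball `r < ρ(T-t)`, with the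
power of `T-t` factored out. Here `z` stands for `v(ρ)`, `p` for `ρ v'(ρ)` (so that `λz + p`
represents the time derivative) and `W` for the value of the potential at `ρ`. -/
noncomputable def energyFlux (lam : ℂ) (W ρ : ℝ) (z p : ℂ) : ℝ :=
  ρ * (inner ℝ (lam * z + p) p
    - (ρ ^ 2 * ‖lam * z + p‖ ^ 2 + ‖p‖ ^ 2 + W * ‖z‖ ^ 2) / 2)

lemma energyFlux_one_nonpos (lam : ℂ) {W : ℝ} (hW : 0 ≤ W) (z p : ℂ) :
    energyFlux lam W 1 z p ≤ 0 := by
  have hsq : energyFlux lam W 1 z p = -(‖lam * z + p - p‖ ^ 2 + W * ‖z‖ ^ 2) / 2 := by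
    rw [norm_sub_sq_real, energyFlux]
    ring
  rw [hsq]
  have : 0 ≤ ‖lam * z + p - p‖ ^ 2 + W * ‖z‖ ^ 2 := by positivity
  linarith

lemma IsMode.hasDerivAt_energyFlux (hv : IsMode W lam v) (hρ : ρ ∈ Ioo (0 : ℝ) 1)
    (hW : DifferentiableAt ℝ W ρ) :
    HasDerivAt (fun s => energyFlux lam (W s) s (v s) (s * deriv v s))
      ((2 * lam.re - 1) / 2
          * (ρ ^ 2 * (‖lam * v ρ + ρ * deriv v ρ‖ ^ 2 + ‖deriv v ρ‖ ^ 2) + W ρ * ‖v ρ‖ ^ 2)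
        - ρ * deriv W ρ / 2 * ‖v ρ‖ ^ 2) ρ := by
  have hp := (hasDerivAt_ofReal ρ).mul (hv.hasDerivAt_deriv hρ)
  have hw := ((hv.hasDerivAt hρ).const_mul lam).add hp
  have hflux := (hasDerivAt_id ρ).mul ((hw.inner ℝ hp).sub
    (((((hasDerivAt_id ρ).pow 2).mul hw.norm_sq).add hp.norm_sq).add
      (hW.hasDerivAt.mul (hv.hasDerivAt hρ).norm_sq) |>.div_const 2))
  -- The energy identity: pair the equation with the time derivative `λv + ρv'`.
  have hpair : inner ℝ (lam * v ρ + ρ * deriv v ρ) ((ρ : ℂ) ^ 2 * modeOperator W lam v ρ) = 0 := by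
    rw [hv.modeOperator_eq_zero ρ hρ, mul_zero, inner_zero_right]
  rw [sq_mul_modeOperator _ _ _ hρ.1.ne'] at hpair
  refine (hflux.congr_deriv ?_).congr_of_eventuallyEq (Eventually.of_forall fun s => rfl)
  simp only [Pi.add_apply, Pi.sub_apply, Pi.mul_apply, Pi.pow_apply, id, Complex.inner,
    Complex.sq_norm, Complex.normSq_apply] at hpair ⊢
  simp only [pow_succ, pow_zero, one_mul, map_add, map_mul, Complex.add_re, Complex.add_im,
    Complex.sub_re, Complex.sub_im, Complex.neg_re, Complex.neg_im, Complex.mul_re, Complex.mul_im,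
    Complex.conj_re, Complex.conj_im, Complex.one_re, Complex.one_im, Complex.re_ofNat,
    Complex.im_ofNat, Complex.ofReal_re, Complex.ofReal_im] at hpair ⊢
  linear_combination -hpair

theorem IsMode.eqOn_zero_of_deriv_potential_neg (hlam : 1 / 2 ≤ lam.re) (hv : IsMode W lam v)
    (hWc : ContinuousOn W (Icc 0 1)) (hW : ∀ ρ ∈ Icc (0 : ℝ) 1, 0 ≤ W ρ)
    (hW' : ∀ ρ ∈ Ioo (0 : ℝ) 1, deriv W ρ < 0) {v₀ p₀ : ℝ → ℂ}
    (hv₀c : ContinuousOn v₀ (Icc 0 1)) (hv₀ : EqOn v v₀ (Ioo 0 1))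
    (hp₀c : ContinuousOn p₀ (Icc 0 1)) (hp₀ : EqOn (fun ρ => ρ * deriv v ρ) p₀ (Ioo 0 1)) :
    EqOn v 0 (Ioo 0 1) := by
  set F : ℝ → ℝ := fun ρ => energyFlux lam (W ρ) ρ (v₀ ρ) (p₀ ρ) with hF
  have hFc : ContinuousOn F (Icc 0 1) := by
    simp only [hF, energyFlux]
    fun_prop
  have hF0 : F 0 = 0 := by simp [hF, energyFlux]
  have hF1 : F 1 ≤ F 0 := by
    rw [hF0]
    exact energyFlux_one_nonpos lam (hW 1 (right_mem_Icc.2 zero_le_one)) _ _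
  have hF' (ρ : ℝ) (hρ : ρ ∈ Ioo (0 : ℝ) 1) :=
    (hv.hasDerivAt_energyFlux hρ
      (differentiableAt_of_deriv_ne_zero (hW' ρ hρ).ne)).congr_of_eventuallyEq
      (f₁ := F) (by
        filter_upwards [isOpen_Ioo.mem_nhds hρ] with s hs
        simp only [hF, ← hv₀ hs, ← hp₀ hs])
  have hbulk (ρ : ℝ) (hρ : ρ ∈ Ioo (0 : ℝ) 1) : 0 ≤ (2 * lam.re - 1) / 2
      * (ρ ^ 2 * (‖lam * v ρ + ρ * deriv v ρ‖ ^ 2 + ‖deriv v ρ‖ ^ 2) + W ρ * ‖v ρ‖ ^ 2) := by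
    have h₁ : 0 ≤ (2 * lam.re - 1) / 2 := by linarith
    have h₂ := hW ρ (Ioo_subset_Icc_self hρ)
    positivity
  have hrepulsion (ρ : ℝ) (hρ : ρ ∈ Ioo (0 : ℝ) 1) : ρ * deriv W ρ / 2 < 0 := by
    linarith [mul_neg_of_pos_of_neg hρ.1 (hW' ρ hρ)]
  have hF'_zero := eq_zero_of_hasDerivAt_nonneg_of_le hFc hF' (fun ρ hρ => sub_nonneg.2 <|
    (mul_nonpos_of_nonpos_of_nonneg (hrepulsion ρ hρ).le (sq_nonneg _)).trans (hbulk ρ hρ)) hF1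
  intro ρ hρ
  by_contra hvρ
  have hpos : 0 < ‖v ρ‖ ^ 2 := pow_pos (norm_pos_iff.2 hvρ) 2
  linarith [hF'_zero ρ hρ, hbulk ρ hρ, mul_neg_of_neg_of_pos (hrepulsion ρ hρ) hpos]

end Energy

section Darboux

/-- The potential whose equation at `λ = 1` is solved by every `g` with `ρ g' = σ g`. -/
noncomputable def riccatiPotential (σ : ℝ → ℝ) (ρ : ℝ) : ℝ :=
  (1 - ρ ^ 2) * (ρ * deriv σ ρ + σ ρ ^ 2 + σ ρ) - 2 * ρ ^ 2 * (σ ρ + 1)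

/-- The supersymmetric partner of `riccatiPotential σ`: the potential obtained by exchanging the two
first-order factors of the operator. -/
noncomputable def partnerPotential (σ : ℝ → ℝ) (ρ : ℝ) : ℝ :=
  (1 - ρ ^ 2) * ((σ ρ + 1) * (σ ρ + 2) - ρ * deriv σ ρ) + 2 * ρ ^ 2 * (σ ρ + 1)

/-- The Darboux transformation of a mode `u` with eigenvalue `λ`, relative to `g` with `ρ g' = σ g`.
The term `(λ-1)ρu` accounts for the weight `(1-ρ²)^((λ-1)/2)` that makes the equation
self-adjoint. -/
noncomputable def darboux (σ : ℝ → ℝ) (lam : ℂ) (u : ℝ → ℂ) (ρ : ℝ) : ℂ :=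
  (1 - (ρ : ℂ) ^ 2) * (deriv u ρ - σ ρ / ρ * u ρ) - (lam - 1) * ρ * u ρ

/-- The derivative of `darboux σ lam u`, with `u''` eliminated by means of the equation. -/
noncomputable def darbouxDeriv (σ : ℝ → ℝ) (lam : ℂ) (u : ℝ → ℂ) (ρ : ℝ) : ℂ :=
  ((lam - 1) * ρ - (1 - (ρ : ℂ) ^ 2) * ((σ ρ + 2) / ρ)) * deriv u ρ
    + (lam ^ 2 - 1 + (1 - (ρ : ℂ) ^ 2) * (σ ρ * (σ ρ + 2) / ρ ^ 2)) * u ρ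

variable {V σ : ℝ → ℝ} {lam : ℂ} {u : ℝ → ℂ} {ρ : ℝ}

lemma IsMode.hasDerivAt_darboux (hu : IsMode (riccatiPotential σ) lam u)
    (hσ : DifferentiableAt ℝ σ ρ) (hρ : ρ ∈ Ioo (0 : ℝ) 1) :
    HasDerivAt (darboux σ lam u) (darbouxDeriv σ lam u ρ) ρ := by
  have hρ0 : (ρ : ℂ) ≠ 0 := mod_cast hρ.1.ne'
  have hid := hasDerivAt_ofReal ρ
  have h := (((hid.pow 2).const_sub 1).mul ((hu.hasDerivAt_deriv hρ).sub
    ((hσ.hasDerivAt.ofReal_comp.div hid hρ0).mul (hu.hasDerivAt hρ)))).sub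
    ((hid.const_mul (lam - 1)).mul (hu.hasDerivAt hρ))
  refine h.congr_deriv ?_
  have hode := hu.modeOperator_eq_zero ρ hρ
  simp only [modeOperator, riccatiPotential, darbouxDeriv, Pi.sub_apply, Pi.pow_apply,
    Pi.mul_apply, Pi.div_apply] at hode ⊢
  push_cast at hode ⊢
  linear_combination (norm := (field_simp; ring)) -hode

lemma one_sub_sq_mul_darbouxDeriv (σ : ℝ → ℝ) (lam : ℂ) (u : ℝ → ℂ) (hρ : ρ ≠ 0) :
    (1 - (ρ : ℂ) ^ 2) * darbouxDeriv σ lam u ρ =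
      ((lam - 1) * ρ - (1 - (ρ : ℂ) ^ 2) * ((σ ρ + 2) / ρ)) * darboux σ lam u ρ
        + (lam - 1) ^ 2 * u ρ := by
  have hρ' : (ρ : ℂ) ≠ 0 := mod_cast hρ
  simp only [darboux, darbouxDeriv]
  field_simp
  ring

lemma IsMode.hasDerivAt_darbouxDeriv (hu : IsMode V lam u)
    (hσ : DifferentiableAt ℝ σ ρ) (hρ : ρ ∈ Ioo (0 : ℝ) 1) :
    HasDerivAt (darbouxDeriv σ lam u)
      (((lam - 1) + 2 * (σ ρ + 2)
            - (1 - (ρ : ℂ) ^ 2) * (deriv σ ρ / ρ - (σ ρ + 2) / ρ ^ 2)) * deriv u ρ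
        + ((lam - 1) * ρ - (1 - (ρ : ℂ) ^ 2) * ((σ ρ + 2) / ρ)) * deriv (deriv u) ρ
        + ((1 - (ρ : ℂ) ^ 2) * (deriv σ ρ * (2 * σ ρ + 2) / ρ ^ 2
              - 2 * (σ ρ * (σ ρ + 2)) / ρ ^ 3) - 2 * (σ ρ * (σ ρ + 2)) / ρ) * u ρ
        + (lam ^ 2 - 1 + (1 - (ρ : ℂ) ^ 2) * (σ ρ * (σ ρ + 2) / ρ ^ 2)) * deriv u ρ) ρ := by
  have hρ0 : (ρ : ℂ) ≠ 0 := mod_cast hρ.1.ne'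
  have hid := hasDerivAt_ofReal ρ
  have hsq := (hid.pow 2).const_sub 1
  have hσ' := hσ.hasDerivAt.ofReal_comp
  have h := (((hid.const_mul (lam - 1)).sub (hsq.mul ((hσ'.add_const 2).div hid hρ0))).mul
    (hu.hasDerivAt_deriv hρ)).add (((hsq.mul ((hσ'.mul (hσ'.add_const 2)).div (hid.pow 2)
      (pow_ne_zero 2 hρ0))).const_add (lam ^ 2 - 1)).mul (hu.hasDerivAt hρ))
  refine h.congr_deriv ?_
  simp only [Pi.sub_apply, Pi.pow_apply, Pi.mul_apply, Pi.div_apply]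
  field_simp
  ring

theorem IsMode.isMode_darboux (hu : IsMode (riccatiPotential σ) lam u)
    (hσ : DifferentiableOn ℝ σ (Ioo 0 1)) :
    IsMode (partnerPotential σ) lam (darboux σ lam u) := by
  have hσ (ρ : ℝ) (hρ : ρ ∈ Ioo (0 : ℝ) 1) : DifferentiableAt ℝ σ ρ :=
    hσ.differentiableAt (isOpen_Ioo.mem_nhds hρ)
  have hv (ρ : ℝ) (hρ : ρ ∈ Ioo (0 : ℝ) 1) := hu.hasDerivAt_darboux (hσ ρ hρ) hρ
  have hderiv : EqOn (deriv (darboux σ lam u)) (darbouxDeriv σ lam u) (Ioo 0 1) :=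
    fun ρ hρ => (hv ρ hρ).deriv
  have hv' (ρ : ℝ) (hρ : ρ ∈ Ioo (0 : ℝ) 1) :=
    (hu.hasDerivAt_darbouxDeriv (hσ ρ hρ) hρ).congr_of_eventuallyEq
      (hderiv.eventuallyEq_of_mem (isOpen_Ioo.mem_nhds hρ))
  refine ⟨fun ρ hρ => (hv ρ hρ).differentiableAt.differentiableWithinAt,
    fun ρ hρ => (hv' ρ hρ).differentiableAt.differentiableWithinAt, fun ρ hρ => ?_⟩
  have hρ0 : (ρ : ℂ) ≠ 0 := mod_cast hρ.1.ne'
  have hode := hu.modeOperator_eq_zero ρ hρ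
  rw [modeOperator, (hv' ρ hρ).deriv, hderiv hρ]
  simp only [modeOperator, riccatiPotential, partnerPotential, darboux,
    darbouxDeriv] at hode ⊢
  push_cast at hode ⊢
  linear_combination (norm := (field_simp; ring))
    ((lam - 1) * ρ - (1 - (ρ : ℂ) ^ 2) * ((σ ρ + 2) / ρ)) * hode

lemma IsMode.sub_one_sq_mul_eqOn_zero (hu : IsMode (riccatiPotential σ) lam u)
    (hσ : DifferentiableOn ℝ σ (Ioo 0 1)) (hv : EqOn (darboux σ lam u) 0 (Ioo 0 1)) :
    EqOn (fun ρ => (lam - 1) ^ 2 * u ρ) 0 (Ioo 0 1) := by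
  intro ρ hρ
  have hv' : darbouxDeriv σ lam u ρ = 0 :=
    (hu.hasDerivAt_darboux (hσ.differentiableAt (isOpen_Ioo.mem_nhds hρ)) hρ).unique
      ((hasDerivAt_const ρ (0 : ℂ)).congr_of_eventuallyEq
        (hv.eventuallyEq_of_mem (isOpen_Ioo.mem_nhds hρ)))
  simpa [hv', hv hρ] using (one_sub_sq_mul_darbouxDeriv σ lam u hρ.1.ne').symm

end Darboux

section Boundary

variable {V σ : ℝ → ℝ} {lam : ℂ} {u : ℝ → ℂ}

lemma IsMode.tendsto_deriv_sq_mul_deriv (hu : IsMode V lam u) {V₀ : ℝ} {a b : ℂ}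
    (hV : Tendsto V (𝓝[>] 0) (𝓝 V₀)) (hua : Tendsto u (𝓝[>] 0) (𝓝 a))
    (hu'b : Tendsto (deriv u) (𝓝[>] 0) (𝓝 b)) :
    Tendsto (deriv fun s : ℝ => (s : ℂ) ^ 2 * deriv u s) (𝓝[>] 0) (𝓝 (V₀ * a)) := by
  have hid : Tendsto (fun s : ℝ => (s : ℂ)) (𝓝[>] 0) (𝓝 0) :=
    (Complex.continuous_ofReal.tendsto' 0 0 Complex.ofReal_zero).mono_left nhdsWithin_le_nhds
  have hlim := (((hid.pow 3).const_mul (2 * lam)).mul hu'b |>.add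
    (((Complex.continuous_ofReal.tendsto V₀).comp hV).mul hua) |>.add
    (((hid.pow 2).const_mul (lam * (lam + 1))).mul hua)).div
    ((hid.pow 2).const_sub 1) (by simp)
  refine Tendsto.congr' ?_ (by simpa using hlim)
  filter_upwards [Ioo_mem_nhdsGT zero_lt_one] with s hs
  exact (hu.hasDerivAt_sq_mul_deriv hs).deriv.symm

lemma IsMode.apply_zero_eq_zero (hu : IsMode V lam u) (hu_C1 : ContDiffOn ℝ 1 u (Icc 0 1))
    {V₀ : ℝ} (hV : Tendsto V (𝓝[>] 0) (𝓝 V₀)) (hV₀ : V₀ ≠ 0) : u 0 = 0 := by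
  have hIoo : Ioo (0 : ℝ) 1 ∈ 𝓝[>] 0 := Ioo_mem_nhdsGT zero_lt_one
  have hle : 𝓝[>] (0 : ℝ) ≤ 𝓝[Icc 0 1] 0 :=
    nhdsWithin_le_of_mem (mem_of_superset hIoo Ioo_subset_Icc_self)
  have h0 : (0 : ℝ) ∈ Icc 0 1 := left_mem_Icc.2 zero_le_one
  have hu_lim : Tendsto u (𝓝[>] 0) (𝓝 (u 0)) := (hu_C1.continuousOn 0 h0).mono_left hle
  have hu'_lim : Tendsto (deriv u) (𝓝[>] 0) (𝓝 (derivWithin u (Icc 0 1) 0)) :=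
    ((hu_C1.continuousOn_derivWithin (uniqueDiffOn_Icc zero_lt_one) le_rfl 0 h0).mono_left
      hle).congr' ((eqOn_deriv_derivWithin_Icc u 0 1).symm.eventuallyEq_of_mem hIoo)
  have hzero : HasDerivWithinAt (fun s : ℝ => (s : ℂ) ^ 2 * deriv u s) 0 (Ici 0) 0 := by
    simpa using hasDerivWithinAt_sq_smul_zero hu'_lim
  have hV₀u : HasDerivWithinAt (fun s : ℝ => (s : ℂ) ^ 2 * deriv u s) (V₀ * u 0) (Ici 0) 0 :=
    hasDerivWithinAt_Ici_of_tendsto_deriv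
      (fun s hs => (hu.hasDerivAt_sq_mul_deriv hs).differentiableAt.differentiableWithinAt)
      (hzero.continuousWithinAt.mono fun s hs => hs.1.le) hIoo
      (hu.tendsto_deriv_sq_mul_deriv hV hu_lim hu'_lim)
  have hprod := (uniqueDiffOn_Ici (0 : ℝ) 0 self_mem_Ici).eq_deriv _ hV₀u hzero
  exact (mul_eq_zero.1 hprod).resolve_left (mod_cast hV₀)

theorem IsMode.darboux_eqOn_zero (hlam : 1 / 2 ≤ lam.re) (hu : IsMode (riccatiPotential σ) lam u)
    (hu_C1 : ContDiffOn ℝ 1 u (Icc 0 1)) (hu0 : u 0 = 0)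
    (hσc : ContinuousOn σ (Icc 0 1)) (hσ : DifferentiableOn ℝ σ (Ioo 0 1))
    (hWc : ContinuousOn (partnerPotential σ) (Icc 0 1))
    (hW : ∀ ρ ∈ Icc (0 : ℝ) 1, 0 ≤ partnerPotential σ ρ)
    (hW' : ∀ ρ ∈ Ioo (0 : ℝ) 1, deriv (partnerPotential σ) ρ < 0) :
    EqOn (darboux σ lam u) 0 (Ioo 0 1) := by
  have huc := hu_C1.continuousOn
  have hu'c := hu_C1.continuousOn_derivWithin (uniqueDiffOn_Icc zero_lt_one) le_rfl
  have hu' := eqOn_deriv_derivWithin_Icc u 0 1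
  obtain ⟨q, hqc, hq⟩ := exists_continuousOn_eqOn_slope huc
    (hu_C1.differentiableOn one_ne_zero 0 (left_mem_Icc.2 zero_le_one))
  replace hq (ρ : ℝ) (hρ : ρ ∈ Ioo (0 : ℝ) 1) : u ρ / ρ = q ρ := by
    rw [← hq ⟨Ioo_subset_Icc_self hρ, hρ.1.ne'⟩, slope_def_module, hu0, sub_zero, sub_zero,
      Complex.real_smul, Complex.ofReal_inv, div_eq_inv_mul]
  refine (hu.isMode_darboux hσ).eqOn_zero_of_deriv_potential_neg hlam hWc hW hW'
    (v₀ := fun ρ => (1 - (ρ : ℂ) ^ 2) * (derivWithin u (Icc 0 1) ρ - σ ρ * q ρ)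
      - (lam - 1) * ρ * u ρ)
    (p₀ := fun ρ => ((lam - 1) * ρ ^ 2 - (1 - (ρ : ℂ) ^ 2) * (σ ρ + 2))
        * derivWithin u (Icc 0 1) ρ
      + (lam ^ 2 - 1) * ρ * u ρ + (1 - (ρ : ℂ) ^ 2) * (σ ρ * (σ ρ + 2)) * q ρ)
    (by fun_prop) (fun ρ hρ => ?_) (by fun_prop) (fun ρ hρ => ?_)
  · simp only [darboux, hu' hρ, ← hq ρ hρ]
    ring
  · have hρ0 : (ρ : ℂ) ≠ 0 := mod_cast hρ.1.ne'
    have hσρ := hσ.differentiableAt (isOpen_Ioo.mem_nhds hρ)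
    simp only [(hu.hasDerivAt_darboux hσρ hρ).deriv, darbouxDeriv, hu' hρ, ← hq ρ hρ]
    field_simp
    ring

end Boundary

section Gauge

/-- The mode at `λ = 1` generated by the time translation symmetry. -/
noncomputable def gaugeMode (ρ : ℝ) : ℝ := ρ / (1 + ρ ^ 2)

/-- The scale-invariant logarithmic derivative `ρ g' / g` of the gauge mode `g`, extended
continuously to `ρ = 0`. -/
noncomputable def gaugeLogDeriv (ρ : ℝ) : ℝ := (1 - ρ ^ 2) / (1 + ρ ^ 2)

lemma hasDerivAt_gaugeMode (ρ : ℝ) :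
    HasDerivAt gaugeMode ((1 - ρ ^ 2) / (1 + ρ ^ 2) ^ 2) ρ :=
  ((hasDerivAt_id' ρ).fun_div (((hasDerivAt_id' ρ).fun_pow 2).const_add 1)
    (by positivity)).congr_deriv (by ring)

lemma hasDerivAt_gaugeLogDeriv (ρ : ℝ) :
    HasDerivAt gaugeLogDeriv (-4 * ρ / (1 + ρ ^ 2) ^ 2) ρ :=
  ((((hasDerivAt_id' ρ).fun_pow 2).const_sub 1).fun_div
    (((hasDerivAt_id' ρ).fun_pow 2).const_add 1) (by positivity)).congr_deriv (by ring)

lemma riccatiPotential_gaugeLogDeriv : riccatiPotential gaugeLogDeriv = Vpot := by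
  ext ρ
  rw [riccatiPotential, (hasDerivAt_gaugeLogDeriv ρ).deriv, gaugeLogDeriv, Vpot]
  field_simp
  ring

lemma partnerPotential_gaugeLogDeriv :
    partnerPotential gaugeLogDeriv = fun ρ => 2 * (3 - ρ ^ 2) / (1 + ρ ^ 2) := by
  ext ρ
  rw [partnerPotential, (hasDerivAt_gaugeLogDeriv ρ).deriv, gaugeLogDeriv]
  field_simp
  ring

lemma hasDerivAt_partnerPotential_gaugeLogDeriv (ρ : ℝ) :
    HasDerivAt (partnerPotential gaugeLogDeriv) (-16 * ρ / (1 + ρ ^ 2) ^ 2) ρ := by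
  rw [partnerPotential_gaugeLogDeriv]
  exact ((((hasDerivAt_id' ρ).fun_pow 2).const_sub 3).const_mul 2 |>.fun_div
    (((hasDerivAt_id' ρ).fun_pow 2).const_add 1) (by positivity)).congr_deriv (by ring)

end Gauge

section Rigidity

variable {lam : ℂ} {u : ℝ → ℂ}

lemma IsMode.darboux_gaugeLogDeriv_eqOn_zero (hlam : 1 / 2 ≤ lam.re) (hu : IsMode Vpot lam u)
    (hu_C1 : ContDiffOn ℝ 1 u (Icc 0 1)) : EqOn (darboux gaugeLogDeriv lam u) 0 (Ioo 0 1) := by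
  have hu0 : u 0 = 0 := by
    have hV : ContinuousAt Vpot 0 := by
      unfold Vpot
      fun_prop (disch := positivity)
    exact hu.apply_zero_eq_zero hu_C1 (hV.tendsto.mono_left nhdsWithin_le_nhds) (by simp [Vpot])
  rw [← riccatiPotential_gaugeLogDeriv] at hu
  refine hu.darboux_eqOn_zero hlam hu_C1 hu0
    (fun ρ _ => (hasDerivAt_gaugeLogDeriv ρ).continuousAt.continuousWithinAt)
    (fun ρ _ => (hasDerivAt_gaugeLogDeriv ρ).differentiableAt.differentiableWithinAt)
    (fun ρ _ => (hasDerivAt_partnerPotential_gaugeLogDeriv ρ).continuousAt.continuousWithinAt)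
    (fun ρ hρ => ?_) (fun ρ hρ => ?_)
  · rw [partnerPotential_gaugeLogDeriv]
    have : 0 ≤ 3 - ρ ^ 2 := by nlinarith [hρ.1, hρ.2]
    positivity
  · rw [(hasDerivAt_partnerPotential_gaugeLogDeriv ρ).deriv]
    exact div_neg_of_neg_of_pos (by linarith [hρ.1]) (by positivity)

lemma exists_eqOn_const_mul_gaugeMode (hu : DifferentiableOn ℝ u (Ioo 0 1))
    (hv : EqOn (darboux gaugeLogDeriv 1 u) 0 (Ioo 0 1)) :
    ∃ c : ℂ, EqOn u (fun ρ => c * gaugeMode ρ) (Ioo 0 1) := by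
  have hg (ρ : ℝ) := (hasDerivAt_gaugeMode ρ).ofReal_comp
  refine exists_eqOn_const_mul_of_deriv_mul_eq isOpen_Ioo isPreconnected_Ioo hu
    (fun ρ _ => (hg ρ).differentiableAt.differentiableWithinAt) (fun ρ hρ => ?_) fun ρ hρ => ?_
  · have : gaugeMode ρ ≠ 0 := div_ne_zero hρ.1.ne' (by positivity)
    exact_mod_cast this
  have hρ0 : (ρ : ℂ) ≠ 0 := mod_cast hρ.1.ne'
  have hρ1 := one_sub_sq_ne_zero hρ
  have hρ2 : 1 + (ρ : ℂ) ^ 2 ≠ 0 := by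
    have : 1 + ρ ^ 2 ≠ 0 := by positivity
    exact_mod_cast this
  have hu' : deriv u ρ = gaugeLogDeriv ρ / ρ * u ρ := by
    have := hv hρ
    simpa [darboux, hρ1, sub_eq_zero] using this
  rw [hu', (hg ρ).deriv, gaugeLogDeriv, gaugeMode]
  push_cast
  field_simp

theorem stmt_12_general (hlam : 1 / 2 ≤ lam.re) (hu : IsMode Vpot lam u)
    (hu_C1 : ContDiffOn ℝ 1 u (Icc 0 1)) (hnontriv : ∃ ρ ∈ Icc (0 : ℝ) 1, u ρ ≠ 0) :
    lam = 1 ∧ ∃ c : ℂ, c ≠ 0 ∧ ∀ ρ ∈ Icc (0 : ℝ) 1, u ρ = c * gaugeMode ρ := by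
  have hextend {f : ℝ → ℂ} (hf : ContinuousOn f (Icc 0 1)) (huf : EqOn u f (Ioo 0 1)) :
      EqOn u f (Icc 0 1) :=
    huf.of_subset_closure hu_C1.continuousOn hf Ioo_subset_Icc_self
      (closure_Ioo zero_ne_one).superset
  obtain ⟨ρ₀, hρ₀, huρ₀⟩ := hnontriv
  have hv := hu.darboux_gaugeLogDeriv_eqOn_zero hlam hu_C1
  obtain rfl : lam = 1 := by
    by_contra hne
    have hsq := (riccatiPotential_gaugeLogDeriv ▸ hu).sub_one_sq_mul_eqOn_zero
      (fun ρ _ => (hasDerivAt_gaugeLogDeriv ρ).differentiableAt.differentiableWithinAt) hv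
    exact huρ₀ (hextend continuousOn_const (fun ρ hρ => (mul_eq_zero.1 (hsq hρ)).resolve_left
      (pow_ne_zero 2 (sub_ne_zero.2 hne))) hρ₀)
  obtain ⟨c, hc⟩ := exists_eqOn_const_mul_gaugeMode hu.differentiableOn hv
  have hgauge : Continuous gaugeMode :=
    continuous_iff_continuousAt.2 fun ρ => (hasDerivAt_gaugeMode ρ).continuousAt
  have huc := hextend (by fun_prop) hc
  refine ⟨rfl, c, ?_, huc⟩
  rintro rfl
  exact huρ₀ (by simpa using huc hρ₀)

end Rigidity

/-- no unstable eigenvalues with `Re λ ≥ 1/2`: if `Re λ ≥ 1/2` and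
`u ∈ C^∞[0,1]` is a nontrivial solution of the eigenvalue equation with potential `V`,
then `λ = 1` and `u` is a nonzero multiple of the gauge mode `ρ/(1+ρ²)`. -/
theorem stmt_12 (lam : ℂ) (hlam : (1:ℝ)/2 ≤ lam.re) (u : ℝ → ℂ)
    (hu : ContDiffOn ℝ (⊤ : ℕ∞) u (Set.Icc 0 1))
    (hnontriv : ∃ ρ ∈ Set.Icc (0:ℝ) 1, u ρ ≠ 0)
    (hode : ∀ ρ ∈ Set.Ioo (0:ℝ) 1,
      -(1 - (ρ:ℂ) ^ 2) * deriv (deriv u) ρ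
      - (2 * (1 - (ρ:ℂ) ^ 2) / (ρ:ℂ)) * deriv u ρ
      + 2 * lam * (ρ:ℂ) * deriv u ρ
      + (((Vpot ρ : ℝ) : ℂ) / (ρ:ℂ) ^ 2) * u ρ
      + lam * (lam + 1) * u ρ = 0) :
    lam = 1 ∧ ∃ c : ℂ, c ≠ 0 ∧ ∀ ρ ∈ Set.Icc (0:ℝ) 1,
      u ρ = c * ((ρ / (1 + ρ ^ 2) : ℝ) : ℂ) :=
  stmt_12_general hlam
    (.of_contDiffOn ((contDiffOn_infty.1 hu 2).mono Ioo_subset_Icc_self) hode)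
    (contDiffOn_infty.1 hu 1) hnontriv
end
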